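/- Let n ≥ 1 and let K1, K2 be n×n real positive semidefinite matrices satisfying (1/n)·trace(K2) ≤ 1, and set Λ = (1/n)(K1 − K2). Let I be a nonempty proper subset of {1,…,n} and suppose ε1, ε2 ≥ 0 satisfy ‖(1/n)K1[I,Iᶜ]‖_F ≤ ε1 and ‖(1/n)K2[I,I]‖_2 ≤ ε2. Then the off-diagonal block of Λ satisfies ‖Λ[I,Iᶜ]‖_F² ≤ 2(ε1² + ε2); consequently, if Λ̃ denotes the matrix obtained from Λ by zeroing out the blocks Λ[I,Iᶜ] and Λ[Iᶜ,I] (keeping Λ[I,I] and Λ[Iᶜ,Iᶜ]), then ‖Λ − Λ̃‖_F² ≤ 4(ε1² + ε2). -/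

import Mathlib

/-!
Write `P = (1/n) K2`, a positive semidefinite matrix of trace at most one. For a column index `j`,
let `b` be the part of column `j` of `P` with rows in `I`. Testing positive semidefiniteness on
the vectors `b + t eⱼ` gives `bᵀ P b + 2 t ‖b‖² + t² P j j ≥ 0` for all real `t`, so the
discriminant yields `‖b‖⁴ ≤ (bᵀ P b) (P j j) ≤ ‖P[I,I]‖₂ ‖b‖² (P j j)`, that is
`‖b‖² ≤ ‖P[I,I]‖₂ (P j j)` (`sum_sq_col_le`). Summing over `j ∉ I` gives
`‖P[I,Iᶜ]‖_F² ≤ ε2 · trace P ≤ ε2`. The first bound follows from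
`(x - y)² ≤ 2 x² + 2 y²` entrywise. The second follows because `Λ - Λtilde` consists of exactly the
two off-diagonal blocks, which are transposes of each other.
-/

open Matrix

/-- Frobenius norm of a real matrix. -/
noncomputable def frobNorm {m n : Type*} [Fintype m] [Fintype n] (M : Matrix m n ℝ) : ℝ :=
  Real.sqrt (∑ i, ∑ j, (M i j) ^ 2)

/-- The ℓ2-operator (spectral) norm of a real matrix, as the operator norm of the induced
linear map between Euclidean spaces. -/
noncomputable def l2OpNorm {m n : Type*} [Fintype m] [Fintype n] [DecidableEq n]
    (M : Matrix m n ℝ) : ℝ :=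
  ‖LinearMap.toContinuousLinearMap (Matrix.toEuclideanLin M)‖

theorem frobNorm_sq {m n : Type*} [Fintype m] [Fintype n] (M : Matrix m n ℝ) :
    frobNorm M ^ 2 = ∑ i, ∑ j, (M i j) ^ 2 :=
  Real.sq_sqrt (Finset.sum_nonneg fun _ _ => Finset.sum_nonneg fun _ _ => sq_nonneg _)

theorem dotProduct_mulVec_le_l2OpNorm {m : Type*} [Fintype m] [DecidableEq m]
    (M : Matrix m m ℝ) (x : m → ℝ) :
    x ⬝ᵥ (M *ᵥ x) ≤ l2OpNorm M * (x ⬝ᵥ x) := by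
  set T := LinearMap.toContinuousLinearMap (Matrix.toEuclideanLin M) with hT
  set v : EuclideanSpace ℝ m := WithLp.toLp 2 x with hv
  have h1 : x ⬝ᵥ (M *ᵥ x) = inner ℝ v (T v) := by
    simp [hT, hv, EuclideanSpace.inner_eq_star_dotProduct, dotProduct_comm]
  have h2 : x ⬝ᵥ x = ‖v‖ * ‖v‖ := by
    rw [← real_inner_self_eq_norm_mul_norm, EuclideanSpace.inner_eq_star_dotProduct]
    simp [hv]
  have h3 : l2OpNorm M = ‖T‖ := rfl
  rw [h1, h2, h3]
  calc inner ℝ v (T v) ≤ ‖v‖ * ‖T v‖ := real_inner_le_norm _ _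
    _ ≤ ‖v‖ * (‖T‖ * ‖v‖) := by gcongr; exact T.le_opNorm v
    _ = ‖T‖ * (‖v‖ * ‖v‖) := by ring

/-- The part of column `j` of a positive semidefinite matrix `P` with rows picked out by `f` has
squared length at most the spectral norm of the corresponding principal block times `P j j`. -/
theorem sum_sq_col_le {ι m : Type*} [Fintype m] [DecidableEq m]
    {P : Matrix ι ι ℝ} (hP : P.PosSemidef) (f : m → ι) (j : ι) :
    ∑ i, P (f i) j ^ 2 ≤ l2OpNorm (P.submatrix f f) * P j j := by
  set b : m → ℝ := fun i => P (f i) j with hb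
  set q := b ⬝ᵥ (P.submatrix f f *ᵥ b) with hq
  set S := b ⬝ᵥ b with hS
  have hsym : ∀ i, P j (f i) = b i := fun i => by
    simpa using hP.1.apply (f i) j
  have hSe : ∑ i, P (f i) j ^ 2 = S := by
    simp [hS, hb, dotProduct, sq]
  have hquad : ∀ t : ℝ, 0 ≤ P j j * (t * t) + (2 * S) * t + q := by
    intro t
    have h := (hP.submatrix (Sum.elim f (fun _ : Unit => j))).dotProduct_mulVec_nonneg
      (Sum.elim b fun _ => t)
    have e : star (Sum.elim b fun _ : Unit => t) ⬝ᵥ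
        (P.submatrix (Sum.elim f (fun _ : Unit => j)) (Sum.elim f (fun _ : Unit => j)) *ᵥ
          (Sum.elim b fun _ => t)) = P j j * (t * t) + (2 * S) * t + q := by
      have hcol : ∀ i, P (f i) j = b i := fun _ => rfl
      simp only [dotProduct, mulVec, Fintype.sum_sum_type, hq, hS, Pi.star_apply, star_trivial,
        Sum.elim_inl, Sum.elim_inr, submatrix_apply, hsym, hcol, Finset.univ_unique,
        Finset.sum_singleton, mul_add, Finset.sum_add_distrib]
      have e1 : ∑ i, b i * (b i * t) = (∑ i, b i * b i) * t := by
        rw [Finset.sum_mul]; exact Finset.sum_congr rfl fun _ _ => by ring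
      rw [e1]; ring
    rwa [e] at h
  -- A quadratic in `t` that is nowhere negative has `4 S² - 4 (P j j) q ≤ 0`.
  have hd := discrim_le_zero hquad
  have hqle : q ≤ l2OpNorm (P.submatrix f f) * S := dotProduct_mulVec_le_l2OpNorm _ _
  have hD : 0 ≤ P j j := hP.diag_nonneg
  have hN : 0 ≤ l2OpNorm (P.submatrix f f) := norm_nonneg _
  have hS0 : 0 ≤ S := by rw [← hSe]; positivity
  rw [hSe]
  unfold discrim at hd
  rcases hS0.eq_or_lt with h0 | h0
  · rw [← h0]; positivity
  · have h4 := mul_le_mul_of_nonneg_left hqle hD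
    refine le_of_mul_le_mul_right ?_ h0
    nlinarith

theorem spec_offdiag_block_bound
    (n : ℕ) (hn : 1 ≤ n)
    (K1 K2 : Matrix (Fin n) (Fin n) ℝ)
    (hK1 : K1.PosSemidef) (hK2 : K2.PosSemidef)
    (htr : (1 / (n : ℝ)) * K2.trace ≤ 1)
    (Λ : Matrix (Fin n) (Fin n) ℝ)
    (hΛ : Λ = (1 / (n : ℝ)) • (K1 - K2))
    (I : Finset (Fin n)) (hI : I.Nonempty) (hIc : Iᶜ.Nonempty)
    (ε1 ε2 : ℝ) (hε1 : 0 ≤ ε1) (hε2 : 0 ≤ ε2)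
    (hcond1 : frobNorm (Matrix.of fun (i : {x // x ∈ I}) (j : {x // x ∈ Iᶜ}) =>
        (1 / (n : ℝ)) * K1 i.1 j.1) ≤ ε1)
    (hcond2 : l2OpNorm (Matrix.of fun (i : {x // x ∈ I}) (j : {x // x ∈ I}) =>
        (1 / (n : ℝ)) * K2 i.1 j.1) ≤ ε2)
    (Λtilde : Matrix (Fin n) (Fin n) ℝ)
    -- `Λtilde` keeps the diagonal blocks `Λ[I, I]` and `Λ[Iᶜ, Iᶜ]` and zeroes out the
    -- off-diagonal blocks `Λ[I, Iᶜ]` and `Λ[Iᶜ, I]`: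
    (hΛtilde : ∀ i j, Λtilde i j = if (i ∈ I ↔ j ∈ I) then Λ i j else 0) :
    (frobNorm (Matrix.of fun (i : {x // x ∈ I}) (j : {x // x ∈ Iᶜ}) => Λ i.1 j.1)) ^ 2
        ≤ 2 * (ε1 ^ 2 + ε2) ∧
      (frobNorm (Λ - Λtilde)) ^ 2 ≤ 4 * (ε1 ^ 2 + ε2) := by
  subst hΛ
  set P : Matrix (Fin n) (Fin n) ℝ := (1 / (n : ℝ)) • K2 with hPdef
  have hP : P.PosSemidef := hK2.smul (by positivity)
  have hcol : ∀ j, ∑ i : {x // x ∈ I}, P i.1 j ^ 2 ≤ ε2 * P j j := fun j =>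
    (sum_sq_col_le hP (fun i : {x // x ∈ I} => i.1) j).trans
      (mul_le_mul_of_nonneg_right hcond2 hP.diag_nonneg)
  have hB2 : ∑ i : {x // x ∈ I}, ∑ j : {x // x ∈ Iᶜ}, P i.1 j.1 ^ 2 ≤ ε2 := by
    rw [Finset.sum_comm]
    calc ∑ j : {x // x ∈ Iᶜ}, ∑ i : {x // x ∈ I}, P i.1 j.1 ^ 2
        ≤ ∑ j : {x // x ∈ Iᶜ}, ε2 * P j.1 j.1 := Finset.sum_le_sum fun j _ => hcol j.1
      _ = ε2 * ∑ j ∈ Iᶜ, P j j := by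
        rw [← Finset.mul_sum, Finset.sum_coe_sort Iᶜ (fun j => P j j)]
      _ ≤ ε2 * ∑ j, P j j := by
        refine mul_le_mul_of_nonneg_left ?_ hε2
        exact Finset.sum_le_sum_of_subset_of_nonneg (Finset.subset_univ _)
          fun _ _ _ => hP.diag_nonneg
      _ ≤ ε2 * 1 := by
        refine mul_le_mul_of_nonneg_left ?_ hε2
        simpa [hPdef, trace, Finset.mul_sum] using htr
      _ = ε2 := mul_one _
  have hB1 : ∑ i : {x // x ∈ I}, ∑ j : {x // x ∈ Iᶜ}, ((1 / (n : ℝ)) * K1 i.1 j.1) ^ 2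
      ≤ ε1 ^ 2 := by
    have h := pow_le_pow_left₀ (Real.sqrt_nonneg _) hcond1 2
    exact (frobNorm_sq _).symm.trans_le h
  set L : Matrix (Fin n) (Fin n) ℝ := (1 / (n : ℝ)) • (K1 - K2) with hL
  have hmain : ∑ i : {x // x ∈ I}, ∑ j : {x // x ∈ Iᶜ}, L i.1 j.1 ^ 2 ≤ 2 * (ε1 ^ 2 + ε2) := by
    calc ∑ i : {x // x ∈ I}, ∑ j : {x // x ∈ Iᶜ}, L i.1 j.1 ^ 2
        ≤ ∑ i : {x // x ∈ I}, ∑ j : {x // x ∈ Iᶜ},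
            (2 * ((1 / (n : ℝ)) * K1 i.1 j.1) ^ 2 + 2 * P i.1 j.1 ^ 2) := by
          refine Finset.sum_le_sum fun i _ => Finset.sum_le_sum fun j _ => ?_
          have e : L i.1 j.1 = (1 / (n : ℝ)) * K1 i.1 j.1 - P i.1 j.1 := by
            simp [hL, hPdef, mul_sub]
          rw [e]
          nlinarith [sq_nonneg ((1 / (n : ℝ)) * K1 i.1 j.1 + P i.1 j.1)]
      _ ≤ 2 * (ε1 ^ 2 + ε2) := by
          simp only [Finset.sum_add_distrib, ← Finset.mul_sum]
          linarith
  refine ⟨by rw [frobNorm_sq]; exact hmain, ?_⟩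
  have hsym : ∀ i j, L i j = L j i := fun i j => by
    have h1 := hK1.1.apply i j
    have h2 := hK2.1.apply i j
    simp only [star_trivial] at h1 h2
    simp [hL, h1, h2]
  have hfin : ∑ i ∈ I, ∑ j ∈ Iᶜ, L i j ^ 2 ≤ 2 * (ε1 ^ 2 + ε2) := by
    rw [← Finset.sum_coe_sort I]
    simp only [← Finset.sum_coe_sort Iᶜ]
    exact hmain
  have hrow1 : ∀ i ∈ I, ∑ j, (L - Λtilde) i j ^ 2 = ∑ j ∈ Iᶜ, L i j ^ 2 := fun i hi => by
    rw [← Finset.sum_add_sum_compl I, Finset.sum_eq_zero, zero_add]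
    · refine Finset.sum_congr rfl fun j hj => ?_
      simp [hΛtilde, hi, Finset.mem_compl.1 hj]
    · intro j hj
      simp [hΛtilde, hi, hj]
  have hrow2 : ∀ i ∈ Iᶜ, ∑ j, (L - Λtilde) i j ^ 2 = ∑ j ∈ I, L i j ^ 2 := fun i hi => by
    have hi' := Finset.mem_compl.1 hi
    rw [← Finset.sum_add_sum_compl I, Finset.sum_eq_zero (s := Iᶜ), add_zero]
    · refine Finset.sum_congr rfl fun j hj => ?_
      simp [hΛtilde, hi', hj]
    · intro j hj
      simp [hΛtilde, hi', Finset.mem_compl.1 hj]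
  have hswap : ∑ i ∈ Iᶜ, ∑ j ∈ I, L i j ^ 2 = ∑ i ∈ I, ∑ j ∈ Iᶜ, L i j ^ 2 := by
    rw [Finset.sum_comm]
    exact Finset.sum_congr rfl fun i _ => Finset.sum_congr rfl fun j _ => by rw [hsym]
  rw [frobNorm_sq, ← Finset.sum_add_sum_compl I, Finset.sum_congr rfl hrow1,
    Finset.sum_congr rfl hrow2, hswap]
  linarith
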